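/- Let S₀ := {(β₁, β₂) ∈ ℚ × ℚ : 3β₁ ∈ ℤ, β₂ ∈ ℤ, 3β₁ + β₂ ≥ 0, β₂ ≥ 0}. Then the set of β = (β₁, β₂) ∈ S₀ such that 2β₁ + β₂ ≤ 1 and 4β₁ + β₂ is a negative integer is exactly the singleton {(−1, 3)}. -/

import Mathlib

/-!
The weights `(4,1)` and `(2,1)` are `(3,1) + (1,0)` and `(3,1) - (1,0)`, so on the half-plane
`0 ≤ 3β₁ + β₂` one has `-(2β₁ + β₂) ≤ β₁ ≤ 4β₁ + β₂`. Degree at most `1` and pairing at most `-1`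
therefore squeeze `β₁` to `-1`; on that line the half-plane gives `3 ≤ β₂` and the degree bound
gives `β₂ ≤ 3`.
-/

section OrderedRing

variable {R : Type*} [CommRing R] [PartialOrder R] [IsOrderedRing R]

theorem le_four_mul_add_of_three_mul_add_nonneg {x y : R} (h : 0 ≤ 3 * x + y) :
    x ≤ 4 * x + y := by
  linear_combination h

theorem neg_two_mul_add_le_of_three_mul_add_nonneg {x y : R} (h : 0 ≤ 3 * x + y) :
    -(2 * x + y) ≤ x := by
  linear_combination h

theorem unique_non_Inonnegative_class_general :
    {β : R × R | 0 ≤ 3 * β.1 + β.2 ∧ 2 * β.1 + β.2 ≤ 1 ∧ 4 * β.1 + β.2 ≤ -1} = {(-1, 3)} := by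
  refine Set.Subset.antisymm ?_ ?_
  · rintro ⟨x, y⟩ ⟨heff, hdeg, hpair⟩
    obtain rfl : x = -1 :=
      le_antisymm ((le_four_mul_add_of_three_mul_add_nonneg heff).trans hpair)
        ((neg_le_neg hdeg).trans (neg_two_mul_add_le_of_three_mul_add_nonneg heff))
    have y_le : y ≤ 3 := by linear_combination hdeg
    have le_y : 3 ≤ y := by linear_combination heff
    exact Prod.ext rfl (le_antisymm y_le le_y)
  · rintro _ rfl
    norm_num

end OrderedRing

/-- Among classes in `S₀` of degree `2β₁ + β₂ ≤ 1`, the unique one whose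
pairing `4β₁ + β₂` with the weight `(4,1)` is a negative integer is `(-1, 3)`. -/
theorem unique_non_Inonnegative_class :
    {β : ℚ × ℚ | ((∃ a : ℤ, 3 * β.1 = (a : ℚ)) ∧ (∃ b : ℤ, β.2 = (b : ℚ)) ∧
        0 ≤ 3 * β.1 + β.2 ∧ 0 ≤ β.2) ∧ 2 * β.1 + β.2 ≤ 1 ∧
        ∃ k : ℤ, k < 0 ∧ 4 * β.1 + β.2 = (k : ℚ)} =
      {((-1 : ℚ), (3 : ℚ))} := by
  refine Set.Subset.antisymm ?_ ?_
  · rintro β ⟨⟨-, -, heff, -⟩, hdeg, k, hk, hpair⟩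
    have k_le : (k : ℚ) ≤ -1 := by exact_mod_cast Int.le_sub_one_of_lt hk
    exact unique_non_Inonnegative_class_general.subset ⟨heff, hdeg, hpair.trans_le k_le⟩
  · rintro _ rfl
    exact ⟨⟨⟨-3, by norm_num⟩, ⟨3, by norm_num⟩, by norm_num, by norm_num⟩, by norm_num,
      -1, by norm_num, by norm_num⟩
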